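/- arXiv:2203.15765 — 2 statements merged into one kernel-verified Lean document; each statement's English description precedes it below -/
import Mathlib

section
/- Let A_f = U_f S_f V_fᵀ and A_g = U_g S_g V_gᵀ with U_f, V_f, U_g, V_g ∈ SO(3) and S_f, S_g diagonal, and let f_F, g_F be the matrix Fisher densities on SO(3) with parameters A_f, A_g, and f_B, g_B the corresponding Bingham densities on S³ obtained via the quaternion correspondence (orientation columns γ⁻¹-images of U Eᵢ Vᵀ and concentrations z₁ = s₁−s₂−s₃, z₂ = s₂−s₁−s₃, z₃ = s₃−s₁−s₂, z₄ = s₁+s₂+s₃). Then the cross entropies satisfy H(f_F, g_F) = H(f_B, g_B) − log(2π²), where H(f_F, g_F) = −∫_{SO(3)} f_F log g_F dR against the Haar probability measure and H(f_B, g_B) = −∮_{S³} f_B log g_B dq against the surface measure. -/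
/-!
The map `gamma` is two-to-one from `S³` onto `SO(3)` and turns quaternion multiplication, which acts
on `ℝ⁴` by orthogonal matrices, into matrix multiplication. Hence the push-forward of the surface
measure is carried by `SO(3)` and invariant under translations, and by uniqueness of Haar measure it
equals `2π² ν` (`map_gamma`); surjectivity of `gamma` (`exists_gamma_eq`) enters here.

On unit vectors `tr (γ(m)ᵀ γ(q)) = 4 (m·q)² - 1`. As `4 S = ∑ zᵢ Eᵢ` and `∑ zᵢ = 0`, the Fisher
exponent at `γ(q)` equals the Bingham exponent at `q` (`trace_eq_bingham`). The normalizing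
constants therefore differ by the factor `c = 2π²`, so `f_F ∘ γ = c f_B` and `g_F ∘ γ = c g_B`, and
`-∫ f_F log g_F dν = -∫ f_B (log c + log g_B) dσ`, where `∫ f_B dσ = 1`.
-/

open Matrix MeasureTheory

/-- Borel/pi measurable structure on `3 × 3` real matrices. -/
noncomputable instance : MeasurableSpace (Matrix (Fin 3) (Fin 3) ℝ) :=
  inferInstanceAs (MeasurableSpace (Fin 3 → Fin 3 → ℝ))

/-- The standard map from unit quaternions `q = (w,x,y,z) ∈ S³ ⊂ ℝ⁴` to rotation matrices. -/
noncomputable def gamma (q : Fin 4 → ℝ) : Matrix (Fin 3) (Fin 3) ℝ :=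
  !![1 - 2*(q 2)^2 - 2*(q 3)^2, 2*(q 1)*(q 2) - 2*(q 0)*(q 3), 2*(q 1)*(q 3) + 2*(q 0)*(q 2);
     2*(q 1)*(q 2) + 2*(q 0)*(q 3), 1 - 2*(q 1)^2 - 2*(q 3)^2, 2*(q 2)*(q 3) - 2*(q 0)*(q 1);
     2*(q 1)*(q 3) - 2*(q 0)*(q 2), 2*(q 2)*(q 3) + 2*(q 0)*(q 1), 1 - 2*(q 1)^2 - 2*(q 2)^2]

/-- `E₁ = diag(1,−1,−1)`, `E₂ = diag(−1,1,−1)`, `E₃ = diag(−1,−1,1)`, `E₄ = I₃`. -/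
noncomputable def EMat : Fin 4 → Matrix (Fin 3) (Fin 3) ℝ :=
  ![Matrix.diagonal ![1, -1, -1], Matrix.diagonal ![-1, 1, -1],
    Matrix.diagonal ![-1, -1, 1], 1]

/-- `R ∈ SO(3)`: a `3 × 3` real orthogonal matrix with determinant `1`. -/
def IsSO3 (R : Matrix (Fin 3) (Fin 3) ℝ) : Prop := Rᵀ * R = 1 ∧ R.det = 1

/-- The unit sphere `S³ ⊂ ℝ⁴`. -/
def unitSphere4 : Set (Fin 4 → ℝ) := {q | ∑ i, (q i)^2 = 1}

/-- `σ` is the surface measure on the unit sphere `S³ ⊂ ℝ⁴`: it is carried by the sphere,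
invariant under the orthogonal group `O(4)`, and has total mass `2π²`. -/
def IsSphereMeasure (σ : Measure (Fin 4 → ℝ)) : Prop :=
  σ unitSphere4ᶜ = 0 ∧ σ Set.univ = ENNReal.ofReal (2 * Real.pi ^ 2) ∧
    ∀ M : Matrix (Fin 4) (Fin 4) ℝ, Mᵀ * M = 1 → σ.map M.mulVec = σ

/-- `ν` is the Haar probability measure on `SO(3)` (viewed as a measure on `3 × 3` matrices):
a probability measure carried by `SO(3)` and invariant under left and right translation. -/
def IsHaarSO3 (ν : Measure (Matrix (Fin 3) (Fin 3) ℝ)) : Prop :=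
  ν {R | IsSO3 R}ᶜ = 0 ∧ ν Set.univ = 1 ∧
    (∀ g, IsSO3 g → ν.map (fun R => g * R) = ν) ∧
    (∀ g, IsSO3 g → ν.map (fun R => R * g) = ν)

/-! ### Quaternions and rotations -/

/-- The degree-two homogeneous form of `gamma`. It agrees with `gamma` on the unit sphere and is
multiplicative for the quaternion product on all of `ℝ⁴`. -/
noncomputable def gammaH (q : Fin 4 → ℝ) : Matrix (Fin 3) (Fin 3) ℝ :=
  !![(q 0)^2 + (q 1)^2 - (q 2)^2 - (q 3)^2, 2*(q 1)*(q 2) - 2*(q 0)*(q 3),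
        2*(q 1)*(q 3) + 2*(q 0)*(q 2);
     2*(q 1)*(q 2) + 2*(q 0)*(q 3), (q 0)^2 - (q 1)^2 + (q 2)^2 - (q 3)^2,
        2*(q 2)*(q 3) - 2*(q 0)*(q 1);
     2*(q 1)*(q 3) - 2*(q 0)*(q 2), 2*(q 2)*(q 3) + 2*(q 0)*(q 1),
        (q 0)^2 - (q 1)^2 - (q 2)^2 + (q 3)^2]

lemma gamma_eq_gammaH {q : Fin 4 → ℝ} (hq : ∑ i, (q i)^2 = 1) : gamma q = gammaH q := by
  simp only [Fin.sum_univ_four] at hq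
  ext i j
  fin_cases i <;> fin_cases j <;> simp [gamma, gammaH] <;> linear_combination -hq

/-- The matrix of right multiplication `q ↦ q p` by the quaternion `p`. -/
def rightMulMat (p : Fin 4 → ℝ) : Matrix (Fin 4) (Fin 4) ℝ :=
  !![p 0, -p 1, -p 2, -p 3;
     p 1, p 0, p 3, -p 2;
     p 2, -p 3, p 0, p 1;
     p 3, p 2, -p 1, p 0]

lemma rightMulMat_orthogonal {p : Fin 4 → ℝ} (hp : ∑ i, (p i)^2 = 1) :
    (rightMulMat p)ᵀ * rightMulMat p = 1 := by
  simp only [Fin.sum_univ_four] at hp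
  ext i j
  fin_cases i <;> fin_cases j <;>
    simp [rightMulMat, Matrix.mul_apply, Fin.sum_univ_four] <;>
    first | linear_combination hp | ring

lemma gammaH_mul (p q : Fin 4 → ℝ) :
    gammaH ((rightMulMat p).mulVec q) = gammaH q * gammaH p := by
  ext i j
  fin_cases i <;> fin_cases j <;>
    simp [gammaH, rightMulMat, Matrix.mul_apply, Fin.sum_univ_three, Fin.sum_univ_four,
      Matrix.mulVec, dotProduct] <;> ring

lemma rightMulMat_mulVec_unit {p q : Fin 4 → ℝ} (hp : ∑ i, (p i)^2 = 1)
    (hq : ∑ i, (q i)^2 = 1) : ∑ i, ((rightMulMat p).mulVec q i)^2 = 1 := by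
  have h : ∑ i, ((rightMulMat p).mulVec q i)^2 = (∑ i, (p i)^2) * ∑ i, (q i)^2 := by
    simp [rightMulMat, Fin.sum_univ_four, Matrix.mulVec, dotProduct]
    ring
  rw [h, hp, hq, one_mul]

lemma gamma_mul {p q : Fin 4 → ℝ} (hp : ∑ i, (p i)^2 = 1) (hq : ∑ i, (q i)^2 = 1) :
    gamma ((rightMulMat p).mulVec q) = gamma q * gamma p := by
  rw [gamma_eq_gammaH (rightMulMat_mulVec_unit hp hq), gamma_eq_gammaH hp, gamma_eq_gammaH hq,
    gammaH_mul]

/-- The symmetric matrix, linear in `R`, which equals `4 q qᵀ` when `R = gamma q`. -/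
def quatGram (R : Matrix (Fin 3) (Fin 3) ℝ) : Matrix (Fin 4) (Fin 4) ℝ :=
  !![1 + R 0 0 + R 1 1 + R 2 2, R 2 1 - R 1 2, R 0 2 - R 2 0, R 1 0 - R 0 1;
     R 2 1 - R 1 2, 1 + R 0 0 - R 1 1 - R 2 2, R 0 1 + R 1 0, R 0 2 + R 2 0;
     R 0 2 - R 2 0, R 0 1 + R 1 0, 1 - R 0 0 + R 1 1 - R 2 2, R 1 2 + R 2 1;
     R 1 0 - R 0 1, R 0 2 + R 2 0, R 1 2 + R 2 1, 1 - R 0 0 - R 1 1 + R 2 2]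

/-- For a rotation, `quatGram R` has rank at most one: the relevant minors are linear combinations
of the orthonormality relations and of the identity between `R` and its cofactor matrix. -/
lemma quatGram_mul {R : Matrix (Fin 3) (Fin 3) ℝ} (hR : IsSO3 R) (k i j : Fin 4) :
    quatGram R k i * quatGram R k j = quatGram R k k * quatGram R i j := by
  obtain ⟨h1, hd⟩ := hR
  have h2 : R * Rᵀ = 1 := mul_eq_one_comm.mp h1
  have h3 : R.adjugate = Rᵀ := by
    calc R.adjugate = R.adjugate * (R * Rᵀ) := by rw [h2, mul_one]
      _ = Rᵀ := by rw [← mul_assoc, Matrix.adjugate_mul, hd, one_smul, one_mul]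
  have a1 := fun i j => congrFun (congrFun h1 i) j
  have a2 := fun i j => congrFun (congrFun h2 i) j
  have a3 := fun i j => congrFun (congrFun h3 i) j
  simp only [Fin.forall_fin_succ, Matrix.mul_apply, Fin.sum_univ_three, Matrix.adjugate_fin_three]
    at a1 a2 a3
  simp at a1 a2 a3
  obtain ⟨⟨b1, b2, b3⟩, ⟨b4, b5, b6⟩, b7, b8, b9⟩ := a1
  obtain ⟨⟨c1, c2, c3⟩, ⟨c4, c5, c6⟩, c7, c8, c9⟩ := a2
  obtain ⟨⟨d1, d2, d3⟩, ⟨d4, d5, d6⟩, d7, d8, d9⟩ := a3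
  fin_cases k <;> fin_cases i <;> fin_cases j <;> simp [quatGram] <;> linarith

/-- Every rotation comes from a unit quaternion, namely a normalized nonzero column of
`quatGram R`. -/
lemma exists_gamma_eq {R : Matrix (Fin 3) (Fin 3) ℝ} (hR : IsSO3 R) :
    ∃ q : Fin 4 → ℝ, ∑ i, (q i)^2 = 1 ∧ gamma q = R := by
  -- The diagonal entries of `quatGram R` sum to `4`, so one of them is positive.
  have hpos : ∃ k, 0 < quatGram R k k := by
    by_contra! h
    have := h 0
    have := h 1
    have := h 2
    have := h 3
    simp [quatGram] at *
    linarith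
  obtain ⟨k, hk⟩ := hpos
  have hs := Real.sq_sqrt hk.le
  have hs0 : Real.sqrt (quatGram R k k) ≠ 0 := (Real.sqrt_pos.mpr hk).ne'
  obtain ⟨q, hq⟩ : ∃ q : Fin 4 → ℝ, ∀ i j, q i * q j = quatGram R i j / 4 := by
    refine ⟨fun i => quatGram R k i / (2 * Real.sqrt (quatGram R k k)), fun i j => ?_⟩
    rw [div_mul_div_comm, quatGram_mul hR k i j,
      show 2 * √(quatGram R k k) * (2 * √(quatGram R k k)) = quatGram R k k * 4 by
        linear_combination 4 * hs, mul_div_mul_left _ _ hk.ne']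
  have hq' := hq
  simp only [Fin.forall_fin_succ] at hq'
  simp [quatGram] at hq'
  obtain ⟨⟨b1, b2, b3, b4⟩, ⟨c1, c2, c3, c4⟩, ⟨d1, d2, d3, d4⟩, e1, e2, e3, e4⟩ := hq'
  refine ⟨q, ?_, ?_⟩
  · simp only [Fin.sum_univ_four]
    linarith
  · ext i j
    fin_cases i <;> fin_cases j <;> simp [gamma] <;> linarith

lemma isSO3_gamma {q : Fin 4 → ℝ} (hq : ∑ i, (q i)^2 = 1) : IsSO3 (gamma q) := by
  have hN : ∑ i, (q i)^2 = (q 0)^2 + (q 1)^2 + (q 2)^2 + (q 3)^2 := Fin.sum_univ_four _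
  rw [gamma_eq_gammaH hq]
  constructor
  · have h : (gammaH q)ᵀ * gammaH q = (∑ i, (q i)^2)^2 • (1 : Matrix (Fin 3) (Fin 3) ℝ) := by
      rw [hN]
      ext i j
      fin_cases i <;> fin_cases j <;>
        simp [gammaH, Matrix.mul_apply, Fin.sum_univ_three] <;> ring
    rw [h, hq, one_pow, one_smul]
  · have h : (gammaH q).det = (∑ i, (q i)^2)^3 := by
      rw [hN, Matrix.det_fin_three]
      simp [gammaH]
      ring
    rw [h, hq, one_pow]

/-! ### The exponents of the two densities agree -/

lemma trace_gamma_transpose_mul {m q : Fin 4 → ℝ} (hm : ∑ i, (m i)^2 = 1)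
    (hq : ∑ i, (q i)^2 = 1) :
    ((gamma m)ᵀ * gamma q).trace = 4 * (∑ k, m k * q k)^2 - 1 := by
  have h : ((gammaH m)ᵀ * gammaH q).trace
      = 4 * (∑ k, m k * q k)^2 - (∑ i, (m i)^2) * ∑ i, (q i)^2 := by
    simp [gammaH, Matrix.trace, Matrix.mul_apply, Fin.sum_univ_three, Fin.sum_univ_four]
    ring
  rw [gamma_eq_gammaH hm, gamma_eq_gammaH hq, h, hm, hq, one_mul]

/-- Since `4 S = ∑ zᵢ Eᵢ` and `∑ zᵢ = 0`, the Fisher exponent at `gamma q` is the Bingham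
exponent at `q`. -/
lemma trace_eq_bingham {U V A : Matrix (Fin 3) (Fin 3) ℝ} {s : Fin 3 → ℝ}
    (hA : A = U * Matrix.diagonal s * Vᵀ) {z : Fin 4 → ℝ}
    (hz : z = ![s 0 - s 1 - s 2, s 1 - s 0 - s 2, s 2 - s 0 - s 1, s 0 + s 1 + s 2])
    {m : Fin 4 → Fin 4 → ℝ} (hmu : ∀ i, ∑ k, (m i k)^2 = 1)
    (hm : ∀ i, gamma (m i) = U * EMat i * Vᵀ) {q : Fin 4 → ℝ} (hq : ∑ i, (q i)^2 = 1) :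
    (Aᵀ * gamma q).trace = ∑ i, z i * (∑ k, m i k * q k)^2 := by
  have hS : Matrix.diagonal s = ∑ i, (z i / 4) • EMat i := by
    subst hz
    ext i j
    fin_cases i <;> fin_cases j <;> simp [Fin.sum_univ_four, EMat] <;> ring
  have hA' : A = ∑ i, (z i / 4) • gamma (m i) := by
    rw [hA, hS, Finset.mul_sum, Finset.sum_mul]
    exact Finset.sum_congr rfl fun i _ => by rw [hm, Matrix.mul_smul, Matrix.smul_mul]
  have hz0 : ∑ i, z i = 0 := by
    subst hz
    simp [Fin.sum_univ_four]
    ring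
  have key : (Aᵀ * gamma q).trace
      = ∑ i, (z i / 4) * (4 * (∑ k, m i k * q k)^2 - 1) := by
    rw [hA', Matrix.transpose_sum, Finset.sum_mul, Matrix.trace_sum]
    exact Finset.sum_congr rfl fun i _ => by
      rw [Matrix.transpose_smul, Matrix.smul_mul, Matrix.trace_smul,
        trace_gamma_transpose_mul (hmu i) hq, smul_eq_mul]
  rw [key]
  calc _ = ∑ i, (z i * (∑ k, m i k * q k)^2 - z i / 4) :=
        Finset.sum_congr rfl fun i _ => by ring
    _ = _ := by rw [Finset.sum_sub_distrib, ← Finset.sum_div, hz0]; ring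

/-! ### Haar measure as a push-forward of the surface measure -/

lemma measurable_entry (i j : Fin 3) :
    Measurable fun R : Matrix (Fin 3) (Fin 3) ℝ => R i j :=
  (measurable_pi_apply j).comp (measurable_pi_apply i)

lemma measurable_of_entries {α : Type*} [MeasurableSpace α] {f : α → Matrix (Fin 3) (Fin 3) ℝ}
    (h : ∀ i j, Measurable fun a => f a i j) : Measurable f :=
  measurable_pi_lambda _ fun i => measurable_pi_lambda _ fun j => h i j

lemma measurable_gamma : Measurable gamma := by
  refine measurable_of_entries fun i j => ?_
  fin_cases i <;> fin_cases j <;> simp [gamma] <;> fun_prop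

lemma measurable_matMul :
    Measurable fun x : Matrix (Fin 3) (Fin 3) ℝ × Matrix (Fin 3) (Fin 3) ℝ => x.1 * x.2 := by
  refine measurable_of_entries fun i j => ?_
  simp only [Matrix.mul_apply]
  exact Finset.measurable_sum _ fun k _ =>
    ((measurable_entry i k).comp measurable_fst).mul ((measurable_entry k j).comp measurable_snd)

lemma measurable_exp_trace (A : Matrix (Fin 3) (Fin 3) ℝ) :
    Measurable fun R : Matrix (Fin 3) (Fin 3) ℝ => Real.exp ((A * R).trace) := by
  refine Real.measurable_exp.comp ?_
  simp only [Matrix.trace, Matrix.diag, Matrix.mul_apply]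
  exact Finset.measurable_sum _ fun i _ => Finset.measurable_sum _ fun j _ =>
    (measurable_entry j i).const_mul _

lemma ae_unit {σ : Measure (Fin 4 → ℝ)} (hσ : IsSphereMeasure σ) :
    ∀ᵐ q ∂σ, ∑ i, (q i)^2 = 1 := hσ.1

/-- `gamma` pushes the surface measure to `2π²` times the Haar probability measure. Writing `μ` for
the push-forward, both sides have the same value on `B` because `(μ × ν){(g, R) | g R ∈ B}` is
`μ B` times the mass of `ν` by right invariance of `μ`, and `ν B` times the mass of `μ` by left
invariance of `ν`. -/
lemma map_gamma {σ : Measure (Fin 4 → ℝ)} (hσ : IsSphereMeasure σ)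
    {ν : Measure (Matrix (Fin 3) (Fin 3) ℝ)} (hν : IsHaarSO3 ν) :
    σ.map gamma = ENNReal.ofReal (2 * Real.pi ^ 2) • ν := by
  have hae := ae_unit hσ
  obtain ⟨-, hmass, hinv⟩ := hσ
  obtain ⟨hνc, hν1, hνl, -⟩ := hν
  have hνae : ∀ᵐ R ∂ν, IsSO3 R := hνc
  have : IsFiniteMeasure σ := ⟨by rw [hmass]; exact ENNReal.ofReal_lt_top⟩
  have : IsProbabilityMeasure ν := ⟨hν1⟩
  set μ := σ.map gamma with hμ
  have : IsFiniteMeasure μ := by rw [hμ]; infer_instance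
  ext B hB
  have hpre : MeasurableSet {x : Matrix (Fin 3) (Fin 3) ℝ × Matrix (Fin 3) (Fin 3) ℝ |
      x.1 * x.2 ∈ B} := measurable_matMul hB
  have e1 : (μ.prod ν) {x | x.1 * x.2 ∈ B} = ENNReal.ofReal (2 * Real.pi ^ 2) * ν B := by
    rw [Measure.prod_apply hpre, hμ,
      lintegral_map (measurable_measure_prodMk_left hpre) measurable_gamma]
    have : ∀ᵐ q ∂σ, ν (Prod.mk (gamma q) ⁻¹' {x | x.1 * x.2 ∈ B}) = ν B := by
      filter_upwards [hae] with q hq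
      conv_rhs => rw [← hνl _ (isSO3_gamma hq)]
      exact (Measure.map_apply (measurable_matMul.comp measurable_prodMk_left) hB).symm
    rw [lintegral_congr_ae this, lintegral_const, hmass, mul_comm]
  have e2 : (μ.prod ν) {x | x.1 * x.2 ∈ B} = μ B := by
    rw [Measure.prod_apply_symm hpre]
    have : ∀ᵐ R ∂ν, μ ((fun g => (g, R)) ⁻¹' {x | x.1 * x.2 ∈ B}) = μ B := by
      filter_upwards [hνae] with R hR
      obtain ⟨p, hp, rfl⟩ := exists_gamma_eq hR
      have hM : Measurable (rightMulMat p).mulVec := by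
        unfold Matrix.mulVec dotProduct
        fun_prop
      rw [hμ, Measure.map_apply measurable_gamma (measurable_prodMk_right hpre),
        Measure.map_apply measurable_gamma hB]
      conv_rhs => rw [← hinv _ (rightMulMat_orthogonal hp)]
      rw [Measure.map_apply hM (measurable_gamma hB)]
      refine measure_congr ?_
      filter_upwards [hae] with q hq
      change (gamma q * gamma p ∈ B) = (gamma ((rightMulMat p).mulVec q) ∈ B)
      rw [gamma_mul hp hq]
    rw [lintegral_congr_ae this, lintegral_const, hν1, mul_one]
  rw [← e2, e1, Measure.smul_apply, smul_eq_mul]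

/-- Change of variables between `SO(3)` and the sphere. -/
lemma integral_gamma {σ : Measure (Fin 4 → ℝ)} (hσ : IsSphereMeasure σ)
    {ν : Measure (Matrix (Fin 3) (Fin 3) ℝ)} (hν : IsHaarSO3 ν)
    {h : Matrix (Fin 3) (Fin 3) ℝ → ℝ} (hh : Measurable h) :
    ∫ q, h (gamma q) ∂σ = 2 * Real.pi ^ 2 * ∫ R, h R ∂ν := by
  rw [← integral_map measurable_gamma.aemeasurable hh.aestronglyMeasurable, map_gamma hσ hν,
    integral_smul_measure, ENNReal.toReal_ofReal (by positivity), smul_eq_mul]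

/-! ### Integrability on the sphere -/

lemma isCompact_unitSphere4 : IsCompact unitSphere4 := by
  refine (isCompact_closedBall (0 : Fin 4 → ℝ) 1).of_isClosed_subset
    (isClosed_eq (by fun_prop) continuous_const) fun q hq => ?_
  rw [mem_closedBall_zero_iff, pi_norm_le_iff_of_nonneg zero_le_one]
  intro i
  rw [Real.norm_eq_abs, ← sq_le_one_iff_abs_le_one, ← show ∑ i, (q i)^2 = 1 from hq]
  exact Finset.single_le_sum (f := fun i => (q i)^2) (fun i _ => sq_nonneg _) (Finset.mem_univ i)

lemma integrable_of_continuous {σ : Measure (Fin 4 → ℝ)} (hσ : IsSphereMeasure σ)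
    {h : (Fin 4 → ℝ) → ℝ} (hh : Continuous h) : Integrable h σ := by
  have : IsFiniteMeasure σ := ⟨by rw [hσ.2.1]; exact ENNReal.ofReal_lt_top⟩
  have hr : σ.restrict unitSphere4 = σ := Measure.restrict_eq_self_of_ae_mem (ae_unit hσ)
  have := hh.continuousOn.integrableOn_compact (μ := σ) isCompact_unitSphere4
  rwa [IntegrableOn, hr] at this

/-- With `f_F, g_F` the matrix Fisher densities on `SO(3)` with parameters
`A_f = U_f S_f V_fᵀ`, `A_g = U_g S_g V_gᵀ`, and `f_B, g_B` the corresponding Bingham densities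
on `S³` (orientation columns `γ⁻¹(U Eᵢ Vᵀ)` and concentrations `z₁ = s₁−s₂−s₃`,
`z₂ = s₂−s₁−s₃`, `z₃ = s₃−s₁−s₂`, `z₄ = s₁+s₂+s₃`), the cross entropies satisfy
`H(f_F, g_F) = H(f_B, g_B) − log(2π²)`. -/
theorem stmt_14 (σ : Measure (Fin 4 → ℝ)) (hσ : IsSphereMeasure σ)
    (ν : Measure (Matrix (Fin 3) (Fin 3) ℝ)) (hν : IsHaarSO3 ν)
    (Uf Vf Ug Vg : Matrix (Fin 3) (Fin 3) ℝ)
    (hUf : IsSO3 Uf) (hVf : IsSO3 Vf) (hUg : IsSO3 Ug) (hVg : IsSO3 Vg)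
    (sf sg : Fin 3 → ℝ)
    (Af Ag : Matrix (Fin 3) (Fin 3) ℝ)
    (hAf : Af = Uf * Matrix.diagonal sf * Vfᵀ) (hAg : Ag = Ug * Matrix.diagonal sg * Vgᵀ)
    (zf zg : Fin 4 → ℝ)
    (hzf : zf = ![sf 0 - sf 1 - sf 2, sf 1 - sf 0 - sf 2, sf 2 - sf 0 - sf 1,
      sf 0 + sf 1 + sf 2])
    (hzg : zg = ![sg 0 - sg 1 - sg 2, sg 1 - sg 0 - sg 2, sg 2 - sg 0 - sg 1,
      sg 0 + sg 1 + sg 2])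
    (mf mg : Fin 4 → Fin 4 → ℝ)
    (hmf_unit : ∀ i, ∑ k, (mf i k)^2 = 1) (hmg_unit : ∀ i, ∑ k, (mg i k)^2 = 1)
    (hmf : ∀ i, gamma (mf i) = Uf * EMat i * Vfᵀ)
    (hmg : ∀ i, gamma (mg i) = Ug * EMat i * Vgᵀ)
    (fF gF : Matrix (Fin 3) (Fin 3) ℝ → ℝ)
    (hfF : ∀ R, fF R = Real.exp ((Afᵀ * R).trace) / ∫ R', Real.exp ((Afᵀ * R').trace) ∂ν)
    (hgF : ∀ R, gF R = Real.exp ((Agᵀ * R).trace) / ∫ R', Real.exp ((Agᵀ * R').trace) ∂ν)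
    (fB gB : (Fin 4 → ℝ) → ℝ)
    (hfB : ∀ q, fB q = Real.exp (∑ i, zf i * (∑ k, mf i k * q k)^2) /
        ∫ q', Real.exp (∑ i, zf i * (∑ k, mf i k * q' k)^2) ∂σ)
    (hgB : ∀ q, gB q = Real.exp (∑ i, zg i * (∑ k, mg i k * q k)^2) /
        ∫ q', Real.exp (∑ i, zg i * (∑ k, mg i k * q' k)^2) ∂σ) :
    -∫ R, fF R * Real.log (gF R) ∂ν
      = (-∫ q, fB q * Real.log (gB q) ∂σ) - Real.log (2 * Real.pi ^ 2) := by
  have hae := ae_unit hσ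
  set c : ℝ := 2 * Real.pi ^ 2 with hc
  have hc0 : 0 < c := by positivity
  have hσ0 : σ ≠ 0 := by
    rintro rfl
    have h : (0 : ENNReal) = ENNReal.ofReal c := hσ.2.1
    exact (ENNReal.ofReal_pos.mpr hc0).ne h
  have : NeZero σ := ⟨hσ0⟩
  have hF : ∀ q : Fin 4 → ℝ, ∑ i, (q i)^2 = 1 →
      (Afᵀ * gamma q).trace = ∑ i, zf i * (∑ k, mf i k * q k)^2 :=
    fun q hq => trace_eq_bingham hAf hzf hmf_unit hmf hq
  have hG : ∀ q : Fin 4 → ℝ, ∑ i, (q i)^2 = 1 →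
      (Agᵀ * gamma q).trace = ∑ i, zg i * (∑ k, mg i k * q k)^2 :=
    fun q hq => trace_eq_bingham hAg hzg hmg_unit hmg hq
  set Zf := ∫ q', Real.exp (∑ i, zf i * (∑ k, mf i k * q' k)^2) ∂σ with hZf
  set Zg := ∫ q', Real.exp (∑ i, zg i * (∑ k, mg i k * q' k)^2) ∂σ with hZg
  have iF : Integrable (fun q' : Fin 4 → ℝ =>
      Real.exp (∑ i, zf i * (∑ k, mf i k * q' k)^2)) σ :=
    integrable_of_continuous hσ (by fun_prop)
  have iG : Integrable (fun q' : Fin 4 → ℝ =>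
      Real.exp (∑ i, zg i * (∑ k, mg i k * q' k)^2)) σ :=
    integrable_of_continuous hσ (by fun_prop)
  have hZf0 : 0 < Zf := integral_exp_pos iF
  have hZg0 : 0 < Zg := integral_exp_pos iG
  have hNf : Zf = c * ∫ R', Real.exp ((Afᵀ * R').trace) ∂ν := by
    rw [← integral_gamma hσ hν (measurable_exp_trace _), hZf]
    refine integral_congr_ae ?_
    filter_upwards [hae] with q hq
    rw [hF q hq]
  have hNg : Zg = c * ∫ R', Real.exp ((Agᵀ * R').trace) ∂ν := by
    rw [← integral_gamma hσ hν (measurable_exp_trace _), hZg]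
    refine integral_congr_ae ?_
    filter_upwards [hae] with q hq
    rw [hG q hq]
  have hfγ : ∀ q : Fin 4 → ℝ, ∑ i, (q i)^2 = 1 → fF (gamma q) = c * fB q := fun q hq => by
    rw [hfF, hfB, hF q hq, hNf, mul_div_assoc', mul_div_mul_left _ _ hc0.ne']
  have hgγ : ∀ q : Fin 4 → ℝ, ∑ i, (q i)^2 = 1 → gF (gamma q) = c * gB q := fun q hq => by
    rw [hgF, hgB, hG q hq, hNg, mul_div_assoc', mul_div_mul_left _ _ hc0.ne']
  have hfm : Measurable fF := by
    rw [funext hfF]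
    exact (measurable_exp_trace _).div_const _
  have hgm : Measurable gF := by
    rw [funext hgF]
    exact (measurable_exp_trace _).div_const _
  have hgpos : ∀ q, 0 < gB q := fun q => by
    rw [hgB]
    exact div_pos (Real.exp_pos _) hZg0
  have cf : Continuous fB := by
    rw [funext hfB]
    fun_prop
  have cg : Continuous gB := by
    rw [funext hgB]
    fun_prop
  have hf1 : ∫ q, fB q ∂σ = 1 := by
    rw [funext hfB, integral_div, ← hZf, div_self hZf0.ne']
  have hI := integral_gamma hσ hν (hfm.mul (Real.measurable_log.comp hgm))
  have hJ : ∫ q, fF (gamma q) * Real.log (gF (gamma q)) ∂σ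
      = ∫ q, c * (Real.log c * fB q + fB q * Real.log (gB q)) ∂σ := by
    refine integral_congr_ae ?_
    filter_upwards [hae] with q hq
    rw [hfγ q hq, hgγ q hq, Real.log_mul hc0.ne' (hgpos q).ne']
    ring
  have hK : ∫ q, c * (Real.log c * fB q + fB q * Real.log (gB q)) ∂σ
      = c * (Real.log c + ∫ q, fB q * Real.log (gB q) ∂σ) := by
    have i1 : Integrable (fun q => Real.log c * fB q) σ :=
      (integrable_of_continuous hσ cf).const_mul _
    have i2 : Integrable (fun q => fB q * Real.log (gB q)) σ :=
      integrable_of_continuous hσ (cf.mul (cg.log fun q => (hgpos q).ne'))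
    rw [integral_const_mul, integral_add i1 i2, integral_const_mul, hf1, mul_one]
  have hL : c * ∫ R, fF R * Real.log (gF R) ∂ν
      = c * (Real.log c + ∫ q, fB q * Real.log (gB q) ∂σ) := by
    rw [← hK, ← hJ]
    exact hI.symm
  rw [mul_left_cancel₀ hc0.ne' hL]
  ring
end

section
/- Let U_f, V_f, U_g, V_g ∈ SO(3) be fixed and, for z ∈ ℝ⁴, define A_f(z) = (1/4) Σᵢ zᵢ U_f Eᵢ V_fᵀ with normalizer F_f(z) = ∫_{SO(3)} exp(tr(A_f(z)ᵀR)) dR, and likewise A_g, F_g. Fix z_f, z_g ∈ ℝ⁴ and let f, g be the matrix Fisher densities with parameters A_f(z_f), A_g(z_g) relative to the Haar probability measure on SO(3). Choose unit quaternions m_{fi}, m_{gi} ∈ S³ with γ(m_{fi}) = U_f Eᵢ V_fᵀ and γ(m_{gi}) = U_g Eᵢ V_gᵀ, and set a_{ij} = m_{gi}·m_{fj}. Then the cross entropy satisfies H(f,g) = −∫_{SO(3)} f log g dR = log F_g(z_g) − Σᵢ₌₁⁴ z_{gi} Σⱼ₌₁⁴ a_{ij}² · (∂F_f/∂z_{fj})(z_f)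 / F_f(z_f). -/
/-!
The cross entropy is affine in the moment functional `L C = ∫ exp (tr (A_fᵀ R)) tr (Cᵀ R) dR`, and
`∂F_f/∂z_j = L (U E_j Vᵀ) / 4` by differentiation under the integral sign (`hasDerivAt_fisherFz`).
So everything reduces to expressing `L (γ(m_{gi}))` through the four values `L (U E_j Vᵀ)`.

The substitution `R ↦ (U E_l Uᵀ) R (V E_l Vᵀ)` preserves the Haar measure and fixes `tr (A_fᵀ R)`,
because the `E_l` are commuting involutions; hence `L C = L ((U E_l Uᵀ) C (V E_l Vᵀ))`
(`moment_conj`). Summing over `l` replaces `Uᵀ C V` by four times its diagonal part, which expands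
in the `E_j` with coefficients `tr ((U E_j Vᵀ)ᵀ C)` (`sum_conj_eq`). For rotations given by unit
quaternions this coefficient is `tr (γ(p)ᵀ γ(q)) = 4 (p·q)² - 1` (`trace_gamma`), and the `-1`
contributes nothing since `∑ E_j = 0`.
-/

open Matrix MeasureTheory

/-- The matrix `A(z) = (1/4) Σᵢ zᵢ U Eᵢ Vᵀ`. -/
noncomputable def AofZ (U V : Matrix (Fin 3) (Fin 3) ℝ) (z : Fin 4 → ℝ) :
    Matrix (Fin 3) (Fin 3) ℝ :=
  (1/4 : ℝ) • ∑ i, z i • (U * EMat i * Vᵀ)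

/-- The matrix Fisher normalizing constant
`F(z) = ∫_{SO(3)} exp(tr(A(z)ᵀ R)) dR` against the Haar probability measure on `SO(3)`. -/
noncomputable def fisherFz (ν : Measure (Matrix (Fin 3) (Fin 3) ℝ))
    (U V : Matrix (Fin 3) (Fin 3) ℝ) (z : Fin 4 → ℝ) : ℝ :=
  ∫ R, Real.exp (((AofZ U V z)ᵀ * R).trace) ∂ν

/-! ### Rotations and the matrices `E_l` -/

/-- The trace inner product of two rotations in terms of their unit quaternions. -/
lemma trace_gamma (p q : Fin 4 → ℝ) (hp : ∑ k, (p k)^2 = 1) (hq : ∑ k, (q k)^2 = 1) :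
    ((gamma p)ᵀ * gamma q).trace = 4 * (∑ k, p k * q k)^2 - 1 := by
  simp only [Fin.sum_univ_four] at hp hq ⊢
  -- On the unit sphere `γ` agrees with its homogeneous quadratic form, for which the trace equals
  -- `4 (p·q)² - |p|²|q|²` identically.
  have key : ∀ q : Fin 4 → ℝ, (q 0)^2 + (q 1)^2 + (q 2)^2 + (q 3)^2 = 1 → gamma q =
      !![(q 0)^2 + (q 1)^2 - (q 2)^2 - (q 3)^2, 2*(q 1)*(q 2) - 2*(q 0)*(q 3),
          2*(q 1)*(q 3) + 2*(q 0)*(q 2);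
        2*(q 1)*(q 2) + 2*(q 0)*(q 3), (q 0)^2 - (q 1)^2 + (q 2)^2 - (q 3)^2,
          2*(q 2)*(q 3) - 2*(q 0)*(q 1);
        2*(q 1)*(q 3) - 2*(q 0)*(q 2), 2*(q 2)*(q 3) + 2*(q 0)*(q 1),
          (q 0)^2 - (q 1)^2 - (q 2)^2 + (q 3)^2] := by
    intro q h
    ext i j
    fin_cases i <;> fin_cases j <;> simp [gamma] <;> linarith
  have h1 : (1:ℝ) = ((p 0)^2 + (p 1)^2 + (p 2)^2 + (p 3)^2) *
      ((q 0)^2 + (q 1)^2 + (q 2)^2 + (q 3)^2) := by rw [hp, hq, one_mul]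
  rw [key p hp, key q hq, h1]
  simp [Matrix.trace, Fin.sum_univ_three, Matrix.mul_apply]
  ring

lemma trace_transpose_mul_eq_sum (C R : Matrix (Fin 3) (Fin 3) ℝ) :
    (Cᵀ * R).trace = ∑ i, ∑ j, C j i * R j i := by
  simp [Matrix.trace, Matrix.mul_apply]

lemma IsSO3.mul_transpose {U : Matrix (Fin 3) (Fin 3) ℝ} (h : IsSO3 U) : U * Uᵀ = 1 :=
  mul_eq_one_comm.mp h.1

lemma IsSO3.transpose {U : Matrix (Fin 3) (Fin 3) ℝ} (h : IsSO3 U) : IsSO3 Uᵀ :=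
  ⟨by simpa using h.mul_transpose, by simpa using h.2⟩

lemma IsSO3.mul {U V : Matrix (Fin 3) (Fin 3) ℝ} (hU : IsSO3 U) (hV : IsSO3 V) :
    IsSO3 (U * V) := by
  refine ⟨?_, by simp [hU.2, hV.2]⟩
  calc (U * V)ᵀ * (U * V) = Vᵀ * (Uᵀ * U) * V := by simp only [transpose_mul, Matrix.mul_assoc]
    _ = 1 := by rw [hU.1, Matrix.mul_one, hV.1]

/-- The diagonal entries of the matrices `E_l`. -/
noncomputable def signs : Fin 4 → Fin 3 → ℝ :=
  ![![1, -1, -1], ![-1, 1, -1], ![-1, -1, 1], ![1, 1, 1]]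

lemma EMat_eq_diagonal (l : Fin 4) : EMat l = Matrix.diagonal (signs l) := by
  fin_cases l
  · rfl
  · rfl
  · rfl
  · change (1 : Matrix (Fin 3) (Fin 3) ℝ) = Matrix.diagonal ![1, 1, 1]
    rw [← Matrix.diagonal_one]
    congr 1
    ext a
    fin_cases a <;> rfl

lemma signs_mul_self (l : Fin 4) (a : Fin 3) : signs l a * signs l a = 1 := by
  fin_cases l <;> fin_cases a <;> simp [signs]

lemma EMat_transpose (l : Fin 4) : (EMat l)ᵀ = EMat l := by
  rw [EMat_eq_diagonal, Matrix.diagonal_transpose]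

lemma isSO3_EMat (l : Fin 4) : IsSO3 (EMat l) := by
  constructor
  · rw [EMat_transpose, EMat_eq_diagonal, Matrix.diagonal_mul_diagonal]
    simp only [signs_mul_self]
    exact Matrix.diagonal_one
  · rw [EMat_eq_diagonal, Matrix.det_diagonal, Fin.prod_univ_three]
    fin_cases l <;> simp [signs]

lemma EMat_conj (l i : Fin 4) : EMat l * EMat i * EMat l = EMat i := by
  simp only [EMat_eq_diagonal, Matrix.diagonal_mul_diagonal]
  congr 1
  ext a
  linear_combination signs i a * signs_mul_self l a

lemma sum_EMat : ∑ l, EMat l = 0 := by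
  ext a b
  simp only [EMat_eq_diagonal, Fin.sum_univ_four, Matrix.add_apply, Matrix.diagonal_apply,
    Matrix.zero_apply]
  fin_cases a <;> fin_cases b <;> simp [signs]

/-- Averaging over conjugation by the `E_l` projects onto the diagonal matrices, where the `E_j`
form a tight frame. -/
lemma sum_EMat_conj (X : Matrix (Fin 3) (Fin 3) ℝ) :
    ∑ l, EMat l * X * EMat l = ∑ j, (EMat j * X).trace • EMat j := by
  ext a b
  simp only [EMat_eq_diagonal, Fin.sum_univ_four, Matrix.add_apply, Matrix.smul_apply, smul_eq_mul,
    Matrix.trace, Fin.sum_univ_three, Matrix.diag_apply, Matrix.diagonal_mul, Matrix.mul_diagonal,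
    Matrix.diagonal_apply]
  fin_cases a <;> fin_cases b <;> simp [signs] <;> ring

lemma sum_conj_eq {U V : Matrix (Fin 3) (Fin 3) ℝ} (C : Matrix (Fin 3) (Fin 3) ℝ) :
    ∑ l, (U * EMat l * Uᵀ) * C * (V * EMat l * Vᵀ)
      = ∑ j, ((U * EMat j * Vᵀ)ᵀ * C).trace • (U * EMat j * Vᵀ) := by
  have h := congrArg (fun Y => U * Y * Vᵀ) (sum_EMat_conj (Uᵀ * C * V))
  simp only [Matrix.mul_sum, Matrix.sum_mul, Matrix.mul_smul, Matrix.smul_mul] at h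
  have ht : ∀ j, ((U * EMat j * Vᵀ)ᵀ * C).trace = (EMat j * (Uᵀ * C * V)).trace := by
    intro j
    rw [transpose_mul, transpose_mul, transpose_transpose, EMat_transpose,
      Matrix.mul_assoc, Matrix.trace_mul_comm]
    simp only [Matrix.mul_assoc]
  simp only [ht]
  rw [← h]
  simp only [Matrix.mul_assoc]

/-- The symmetries `R ↦ (U E_l Uᵀ) R (V E_l Vᵀ)` fix the Fisher parameter. -/
lemma conj_AofZ {U V : Matrix (Fin 3) (Fin 3) ℝ} (hU : IsSO3 U) (hV : IsSO3 V)
    (z : Fin 4 → ℝ) (l : Fin 4) :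
    (U * EMat l * Uᵀ) * AofZ U V z * (V * EMat l * Vᵀ) = AofZ U V z := by
  simp only [AofZ, Matrix.mul_smul, Matrix.smul_mul, Matrix.mul_sum, Matrix.sum_mul]
  congr 1
  refine Finset.sum_congr rfl fun i _ => ?_
  congr 1
  calc U * EMat l * Uᵀ * (U * EMat i * Vᵀ) * (V * EMat l * Vᵀ)
      = U * EMat l * (Uᵀ * U) * EMat i * (Vᵀ * V) * EMat l * Vᵀ := by
        simp only [Matrix.mul_assoc]
    _ = U * (EMat l * EMat i * EMat l) * Vᵀ := by
        rw [hU.1, hV.1]; simp only [Matrix.mul_assoc, Matrix.mul_one]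
    _ = _ := by rw [EMat_conj]

/-! ### Bounds and measurability of trace functions -/

lemma IsSO3.abs_le_one {R : Matrix (Fin 3) (Fin 3) ℝ} (h : IsSO3 R) (i j : Fin 3) :
    |R i j| ≤ 1 := by
  have h1 : ∑ k, R k j * R k j = 1 := by
    have := congrFun (congrFun h.1 j) j
    simpa [Matrix.mul_apply] using this
  have h2 : R i j * R i j ≤ 1 := by
    rw [← h1]
    exact Finset.single_le_sum (f := fun k => R k j * R k j)
      (fun k _ => mul_self_nonneg _) (Finset.mem_univ i)
  rw [← sq_le_one_iff_abs_le_one]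
  nlinarith

lemma abs_trace_le (C : Matrix (Fin 3) (Fin 3) ℝ) {R : Matrix (Fin 3) (Fin 3) ℝ}
    (h : IsSO3 R) : |(Cᵀ * R).trace| ≤ ∑ i, ∑ j, |C j i| := by
  rw [trace_transpose_mul_eq_sum]
  refine (Finset.abs_sum_le_sum_abs _ _).trans (Finset.sum_le_sum fun i _ => ?_)
  refine (Finset.abs_sum_le_sum_abs _ _).trans (Finset.sum_le_sum fun j _ => ?_)
  rw [abs_mul]
  exact mul_le_of_le_one_right (abs_nonneg _) (h.abs_le_one j i)

lemma measurable_matrix {f : Matrix (Fin 3) (Fin 3) ℝ → Matrix (Fin 3) (Fin 3) ℝ}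
    (h : ∀ i j, Measurable fun R => f R i j) : Measurable f :=
  measurable_pi_iff.mpr fun i => measurable_pi_iff.mpr fun j => h i j

lemma measurable_trace (C : Matrix (Fin 3) (Fin 3) ℝ) :
    Measurable fun R : Matrix (Fin 3) (Fin 3) ℝ => (Cᵀ * R).trace := by
  simp only [trace_transpose_mul_eq_sum]
  exact Finset.measurable_sum _ fun i _ => Finset.measurable_sum _ fun j _ =>
    (measurable_entry j i).const_mul _

lemma measurable_mul_left (g : Matrix (Fin 3) (Fin 3) ℝ) :
    Measurable fun R : Matrix (Fin 3) (Fin 3) ℝ => g * R := by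
  refine measurable_matrix fun i j => ?_
  simp only [Matrix.mul_apply]
  exact Finset.measurable_sum _ fun k _ => (measurable_entry k j).const_mul _

lemma measurable_mul_right (g : Matrix (Fin 3) (Fin 3) ℝ) :
    Measurable fun R : Matrix (Fin 3) (Fin 3) ℝ => R * g := by
  refine measurable_matrix fun i j => ?_
  simp only [Matrix.mul_apply]
  exact Finset.measurable_sum _ fun k _ => (measurable_entry i k).mul_const _

/-! ### Haar integrals of trace functions -/

section Haar

variable {ν : Measure (Matrix (Fin 3) (Fin 3) ℝ)}

lemma IsHaarSO3.isProbabilityMeasure (hν : IsHaarSO3 ν) : IsProbabilityMeasure ν := ⟨hν.2.1⟩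

lemma IsHaarSO3.ae (hν : IsHaarSO3 ν) : ∀ᵐ R ∂ν, IsSO3 R := hν.1

lemma IsHaarSO3.integrable (hν : IsHaarSO3 ν) {f : Matrix (Fin 3) (Fin 3) ℝ → ℝ}
    (hf : Measurable f) (K : ℝ) (hK : ∀ R, IsSO3 R → |f R| ≤ K) : Integrable f ν := by
  have := hν.isProbabilityMeasure
  exact Integrable.of_bound hf.aestronglyMeasurable K (hν.ae.mono hK)

lemma IsHaarSO3.integral_mul_mul (hν : IsHaarSO3 ν) {f : Matrix (Fin 3) (Fin 3) ℝ → ℝ}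
    (hf : Measurable f) {g h : Matrix (Fin 3) (Fin 3) ℝ} (hg : IsSO3 g) (hh : IsSO3 h) :
    ∫ R, f (g * R * h) ∂ν = ∫ R, f R ∂ν := by
  have h1 : ∫ R, f R ∂ν = ∫ R, f (R * h) ∂ν := by
    conv_lhs => rw [← hν.2.2.2 h hh]
    exact integral_map (measurable_mul_right h).aemeasurable hf.aestronglyMeasurable
  have h2 : ∫ R, f (R * h) ∂ν = ∫ R, f (g * R * h) ∂ν := by
    conv_lhs => rw [← hν.2.2.1 g hg]
    exact integral_map (measurable_mul_left g).aemeasurable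
      (hf.comp (measurable_mul_right h)).aestronglyMeasurable
  rw [h1, h2]

lemma integrable_exp_trace (hν : IsHaarSO3 ν) (A : Matrix (Fin 3) (Fin 3) ℝ) :
    Integrable (fun R => Real.exp ((Aᵀ * R).trace)) ν := by
  refine hν.integrable (measurable_trace A).exp (Real.exp (∑ i, ∑ j, |A j i|)) fun R hR => ?_
  rw [abs_of_pos (Real.exp_pos _)]
  exact Real.exp_le_exp.mpr ((le_abs_self _).trans (abs_trace_le A hR))

lemma integrable_exp_trace_mul (hν : IsHaarSO3 ν) (A C : Matrix (Fin 3) (Fin 3) ℝ) :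
    Integrable (fun R => Real.exp ((Aᵀ * R).trace) * (Cᵀ * R).trace) ν := by
  refine hν.integrable ((measurable_trace A).exp.mul (measurable_trace C))
    (Real.exp (∑ i, ∑ j, |A j i|) * ∑ i, ∑ j, |C j i|) fun R hR => ?_
  rw [abs_mul, abs_of_pos (Real.exp_pos _)]
  exact mul_le_mul (Real.exp_le_exp.mpr ((le_abs_self _).trans (abs_trace_le A hR)))
    (abs_trace_le C hR) (abs_nonneg _) (Real.exp_pos _).le

lemma fisherFz_pos (hν : IsHaarSO3 ν) (U V : Matrix (Fin 3) (Fin 3) ℝ) (z : Fin 4 → ℝ) :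
    0 < fisherFz ν U V z := by
  have := hν.isProbabilityMeasure
  exact integral_exp_pos (integrable_exp_trace hν _)

/-! ### The first moment and its symmetries -/

/-- The unnormalized first moment `L C = ∫ exp (tr (Aᵀ R)) tr (Cᵀ R) dR` of the matrix Fisher
density with parameter `A`, paired with the matrix `C`. -/
noncomputable def moment (ν : Measure (Matrix (Fin 3) (Fin 3) ℝ))
    (A C : Matrix (Fin 3) (Fin 3) ℝ) : ℝ :=
  ∫ R, Real.exp ((Aᵀ * R).trace) * (Cᵀ * R).trace ∂ν

lemma moment_smul (A C : Matrix (Fin 3) (Fin 3) ℝ) (c : ℝ) :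
    moment ν A (c • C) = c * moment ν A C := by
  simp only [moment, transpose_smul, Matrix.smul_mul, trace_smul, smul_eq_mul]
  rw [← integral_const_mul]
  congr 1
  ext R
  ring

lemma moment_sum (hν : IsHaarSO3 ν) (A : Matrix (Fin 3) (Fin 3) ℝ)
    (C : Fin 4 → Matrix (Fin 3) (Fin 3) ℝ) :
    moment ν A (∑ i, C i) = ∑ i, moment ν A (C i) := by
  simp only [moment, transpose_sum, Matrix.sum_mul, trace_sum, Finset.mul_sum]
  exact integral_finsetSum _ fun i _ => integrable_exp_trace_mul hν A (C i)

/-- The first moment inherits the symmetries of the Fisher density. -/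
lemma moment_conj (hν : IsHaarSO3 ν) {U V : Matrix (Fin 3) (Fin 3) ℝ}
    (hU : IsSO3 U) (hV : IsSO3 V) (z : Fin 4 → ℝ) (C : Matrix (Fin 3) (Fin 3) ℝ) (l : Fin 4) :
    moment ν (AofZ U V z) ((U * EMat l * Uᵀ) * C * (V * EMat l * Vᵀ))
      = moment ν (AofZ U V z) C := by
  have hg : IsSO3 (U * EMat l * Uᵀ) := (hU.mul (isSO3_EMat l)).mul hU.transpose
  have hh : IsSO3 (V * EMat l * Vᵀ) := (hV.mul (isSO3_EMat l)).mul hV.transpose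
  have hsymm : ∀ W : Matrix (Fin 3) (Fin 3) ℝ, (W * EMat l * Wᵀ)ᵀ = W * EMat l * Wᵀ := by
    intro W
    simp only [transpose_mul, transpose_transpose, EMat_transpose, Matrix.mul_assoc]
  -- The symmetry `R ↦ g R h` is self-adjoint for the trace pairing, so it can be moved onto `C`.
  have hadj : ∀ D R : Matrix (Fin 3) (Fin 3) ℝ,
      (Dᵀ * ((U * EMat l * Uᵀ) * R * (V * EMat l * Vᵀ))).trace
        = (((U * EMat l * Uᵀ) * D * (V * EMat l * Vᵀ))ᵀ * R).trace := by
    intro D R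
    rw [transpose_mul (U * EMat l * Uᵀ * D), transpose_mul (U * EMat l * Uᵀ) D, hsymm, hsymm,
      ← Matrix.mul_assoc, Matrix.trace_mul_comm]
    simp only [Matrix.mul_assoc]
  have := hν.integral_mul_mul (f := fun R => Real.exp (((AofZ U V z)ᵀ * R).trace) * (Cᵀ * R).trace)
    ((measurable_trace _).exp.mul (measurable_trace C)) hg hh
  simp only [hadj, conj_AofZ hU hV] at this
  exact this

/-- Every moment is a combination of the four moments against `U E_j Vᵀ`. -/
lemma four_mul_moment (hν : IsHaarSO3 ν) {U V : Matrix (Fin 3) (Fin 3) ℝ}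
    (hU : IsSO3 U) (hV : IsSO3 V) (z : Fin 4 → ℝ) (C : Matrix (Fin 3) (Fin 3) ℝ) :
    4 * moment ν (AofZ U V z) C
      = ∑ j, ((U * EMat j * Vᵀ)ᵀ * C).trace * moment ν (AofZ U V z) (U * EMat j * Vᵀ) := by
  have h := congrArg (moment ν (AofZ U V z)) (sum_conj_eq (U := U) (V := V) C)
  rw [moment_sum hν, moment_sum hν] at h
  simp only [moment_conj hν hU hV, moment_smul] at h
  simpa using h

lemma sum_moment_eq_zero (hν : IsHaarSO3 ν) (A U V : Matrix (Fin 3) (Fin 3) ℝ) :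
    ∑ j, moment ν A (U * EMat j * Vᵀ) = 0 := by
  rw [← moment_sum hν, ← Matrix.sum_mul, ← Matrix.mul_sum, sum_EMat]
  simp [moment]

/-! ### Partial derivatives of the normalizer -/

lemma AofZ_update (U V : Matrix (Fin 3) (Fin 3) ℝ) (z : Fin 4 → ℝ) (j : Fin 4) (t : ℝ) :
    AofZ U V (Function.update z j t)
      = AofZ U V z + ((t - z j) / 4) • (U * EMat j * Vᵀ) := by
  have : ∀ i, Function.update z j t i • (U * EMat i * Vᵀ)
      = z i • (U * EMat i * Vᵀ) + if i = j then (t - z j) • (U * EMat j * Vᵀ) else 0 := by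
    intro i
    by_cases h : i = j
    · subst h; simp [← add_smul]
    · simp [h]
  simp only [AofZ, this, Finset.sum_add_distrib, Finset.sum_ite_eq', Finset.mem_univ, if_true,
    smul_add, smul_smul]
  congr 2
  ring

lemma hasDerivAt_fisherFz (hν : IsHaarSO3 ν) (U V : Matrix (Fin 3) (Fin 3) ℝ) (z : Fin 4 → ℝ)
    (j : Fin 4) :
    HasDerivAt (fun t => fisherFz ν U V (Function.update z j t))
      (moment ν (AofZ U V z) (U * EMat j * Vᵀ) / 4) (z j) := by
  have := hν.isProbabilityMeasure
  set A := AofZ U V z with hA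
  set C := U * EMat j * Vᵀ with hC
  set KA := ∑ i, ∑ j, |A j i|
  set KC := ∑ i, ∑ j, |C j i|
  have htr : ∀ (t : ℝ) (R : Matrix (Fin 3) (Fin 3) ℝ),
      ((AofZ U V (Function.update z j t))ᵀ * R).trace
        = (Aᵀ * R).trace + (t - z j) / 4 * (Cᵀ * R).trace := by
    intro t R
    rw [AofZ_update]
    simp [Matrix.add_mul, ← hA, ← hC]
  have hval : moment ν A C / 4 = ∫ R, Real.exp ((Aᵀ * R).trace + (z j - z j) / 4 * (Cᵀ * R).trace)
      * ((Cᵀ * R).trace / 4) ∂ν := by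
    rw [moment, ← integral_div]
    simp [mul_div_assoc]
  rw [hval]
  simp only [fisherFz, htr]
  refine (hasDerivAt_integral_of_dominated_loc_of_deriv_le (μ := ν)
    (F := fun t R => Real.exp ((Aᵀ * R).trace + (t - z j) / 4 * (Cᵀ * R).trace))
    (F' := fun t R => Real.exp ((Aᵀ * R).trace + (t - z j) / 4 * (Cᵀ * R).trace)
      * ((Cᵀ * R).trace / 4)) (bound := fun _ => Real.exp (KA + KC) * KC)
    (Metric.ball_mem_nhds (z j) one_pos) ?_ ?_ ?_ ?_ (integrable_const _) ?_).2
  · exact .of_forall fun t =>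
      ((measurable_trace A).add ((measurable_trace C).const_mul _)).exp.aestronglyMeasurable
  · simpa using integrable_exp_trace hν A
  · exact (((measurable_trace A).add ((measurable_trace C).const_mul _)).exp.mul
      ((measurable_trace C).div_const 4)).aestronglyMeasurable
  · filter_upwards [hν.ae] with R hR t ht
    have h1 := abs_trace_le A hR
    have h2 := abs_trace_le C hR
    have ht' : |(t - z j) / 4| ≤ 1 := by
      rw [Metric.mem_ball, Real.dist_eq] at ht
      rw [abs_div, abs_of_pos (by norm_num : (0:ℝ) < 4)]
      linarith
    have h3 : (t - z j) / 4 * (Cᵀ * R).trace ≤ KC := by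
      refine (le_abs_self _).trans ?_
      rw [abs_mul]
      exact (mul_le_of_le_one_left (abs_nonneg _) ht').trans h2
    rw [Real.norm_eq_abs, abs_mul, abs_of_pos (Real.exp_pos _)]
    refine mul_le_mul (Real.exp_le_exp.mpr (add_le_add ((le_abs_self _).trans h1) h3)) ?_
      (abs_nonneg _) (Real.exp_pos _).le
    rw [abs_div, abs_of_pos (by norm_num : (0:ℝ) < 4)]
    linarith [abs_nonneg (Cᵀ * R).trace]
  · refine .of_forall fun R t _ => ?_
    have : HasDerivAt (fun t : ℝ => (Aᵀ * R).trace + (t - z j) / 4 * (Cᵀ * R).trace)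
        ((Cᵀ * R).trace / 4) t := by
      have := ((((hasDerivAt_id' t).sub_const (z j)).div_const 4).mul_const
        (Cᵀ * R).trace).const_add (Aᵀ * R).trace
      exact this.congr_deriv (by ring)
    exact this.exp

end Haar

/-! ### Cross entropy -/

/-- With `f, g` the matrix Fisher densities with parameters `A_f(z_f)`, `A_g(z_g)`, unit
quaternions `m_{fi}, m_{gi}` with `γ(m_{fi}) = U_f Eᵢ V_fᵀ`, `γ(m_{gi}) = U_g Eᵢ V_gᵀ`, and
`a_{ij} = m_{gi}·m_{fj}`, the cross entropy satisfies `H(f,g) = −∫_{SO(3)} f log g dR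
  = log F_g(z_g) − Σᵢ z_{gi} Σⱼ a_{ij}² (∂F_f/∂z_{fj})(z_f) / F_f(z_f)`. -/
theorem stmt_16 (ν : Measure (Matrix (Fin 3) (Fin 3) ℝ)) (hν : IsHaarSO3 ν)
    (Uf Vf Ug Vg : Matrix (Fin 3) (Fin 3) ℝ)
    (hUf : IsSO3 Uf) (hVf : IsSO3 Vf) (hUg : IsSO3 Ug) (hVg : IsSO3 Vg)
    (zf zg : Fin 4 → ℝ)
    (mf mg : Fin 4 → Fin 4 → ℝ)
    (hmf_unit : ∀ i, ∑ k, (mf i k)^2 = 1) (hmg_unit : ∀ i, ∑ k, (mg i k)^2 = 1)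
    (hmf : ∀ i, gamma (mf i) = Uf * EMat i * Vfᵀ)
    (hmg : ∀ i, gamma (mg i) = Ug * EMat i * Vgᵀ)
    (a : Fin 4 → Fin 4 → ℝ) (ha : ∀ i j, a i j = ∑ k, mg i k * mf j k) :
    -∫ R, (Real.exp (((AofZ Uf Vf zf)ᵀ * R).trace) / fisherFz ν Uf Vf zf) *
          Real.log (Real.exp (((AofZ Ug Vg zg)ᵀ * R).trace) / fisherFz ν Ug Vg zg) ∂ν
      = Real.log (fisherFz ν Ug Vg zg)
        - ∑ i, zg i * ∑ j, (a i j)^2 *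
            ((deriv (fun t => fisherFz ν Uf Vf (Function.update zf j t)) (zf j))
              / fisherFz ν Uf Vf zf) := by
  set Ff := fisherFz ν Uf Vf zf with hFf
  set Fg := fisherFz ν Ug Vg zg with hFg
  have hFf0 : 0 < Ff := fisherFz_pos hν _ _ _
  have hFg0 : 0 < Fg := fisherFz_pos hν _ _ _
  have hint : ∫ R, (Real.exp (((AofZ Uf Vf zf)ᵀ * R).trace) / Ff) *
      Real.log (Real.exp (((AofZ Ug Vg zg)ᵀ * R).trace) / Fg) ∂ν
      = moment ν (AofZ Uf Vf zf) (AofZ Ug Vg zg) / Ff - Real.log Fg := by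
    have e : ∀ R : Matrix (Fin 3) (Fin 3) ℝ, (Real.exp (((AofZ Uf Vf zf)ᵀ * R).trace) / Ff) *
        Real.log (Real.exp (((AofZ Ug Vg zg)ᵀ * R).trace) / Fg)
        = Real.exp (((AofZ Uf Vf zf)ᵀ * R).trace) * ((AofZ Ug Vg zg)ᵀ * R).trace / Ff
          - Real.exp (((AofZ Uf Vf zf)ᵀ * R).trace) * (Real.log Fg / Ff) := by
      intro R
      rw [Real.log_div (Real.exp_ne_zero _) hFg0.ne', Real.log_exp]
      ring
    simp only [e]
    rw [integral_sub ((integrable_exp_trace_mul hν _ _).div_const _)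
      ((integrable_exp_trace hν _).mul_const _), integral_div, integral_mul_const]
    change moment ν (AofZ Uf Vf zf) (AofZ Ug Vg zg) / Ff - Ff * (Real.log Fg / Ff) = _
    rw [mul_div_cancel₀ _ hFf0.ne']
  have hL : ∀ i, moment ν (AofZ Uf Vf zf) (Ug * EMat i * Vgᵀ)
      = ∑ j, (a i j)^2 * moment ν (AofZ Uf Vf zf) (Uf * EMat j * Vfᵀ) := by
    intro i
    have h4 := four_mul_moment hν hUf hVf zf (Ug * EMat i * Vgᵀ)
    have ht : ∀ j, ((Uf * EMat j * Vfᵀ)ᵀ * (Ug * EMat i * Vgᵀ)).trace = 4 * (a i j)^2 - 1 := by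
      intro j
      rw [← hmf, ← hmg, trace_gamma _ _ (hmf_unit j) (hmg_unit i), ha]
      simp only [mul_comm]
    simp only [ht, sub_mul, one_mul, Finset.sum_sub_distrib, sum_moment_eq_zero hν, sub_zero,
      mul_assoc (4 : ℝ), ← Finset.mul_sum] at h4
    linarith
  have hmom : moment ν (AofZ Uf Vf zf) (AofZ Ug Vg zg)
      = 1/4 * ∑ i, zg i * ∑ j, (a i j)^2 * moment ν (AofZ Uf Vf zf) (Uf * EMat j * Vfᵀ) := by
    conv_lhs => rw [AofZ.eq_def Ug Vg zg]
    simp only [moment_smul, moment_sum hν, hL]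
  rw [hint, hmom]
  simp only [(hasDerivAt_fisherFz hν Uf Vf zf _).deriv]
  have hs : ∑ i, zg i * ∑ j, (a i j)^2 *
      (moment ν (AofZ Uf Vf zf) (Uf * EMat j * Vfᵀ) / 4 / Ff)
      = (1/4 * ∑ i, zg i * ∑ j, (a i j)^2 * moment ν (AofZ Uf Vf zf) (Uf * EMat j * Vfᵀ)) / Ff := by
    simp only [Finset.mul_sum, Finset.sum_div]
    refine Finset.sum_congr rfl fun i _ => Finset.sum_congr rfl fun j _ => ?_
    ring
  rw [hs]
  ring
end
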